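/- arXiv:1708.06948 — 3 statements merged into one kernel-verified Lean document; each statement's English description precedes it below -/
import Mathlib

section
/- For α = 1,…,m let X^α be real random variables with laws ν^α having finite exponential moments, and for each α let β^{α,(1)},…,β^{α,(n(α))} be standard Brownian bridges on [0,1] with σ^α_i > 0 and ξ^{α,(i)}_t = t·X^α + σ^α_i β^{α,(i)}_t, where the family consisting of all X^α and all bridges β^{α,(i)} (across all α and i) is mutually independent. Let J^{α,(i)} : [0,1] → {0,1} be deterministic right-continuous functions with finitely many discontinuities, let ℱ^α_t = σ(J^{α,(i)}(u)·ξ^{α,(i)}_u : 0 ≤ u ≤ t, 1 ≤ i ≤ n(α)), and let ℋ_t = σ(ℱ^1_t ∪ ⋯ ∪ ℱ^m_t). Then for every t ∈ [0,1) and all bounded measurable φ_α : ℝ → ℝ, almost surely E[∏_{α=1}^m φ_α(X^α) | ℋ_t] = ∏_{α=1}^m E[φ_α(X^α) | ℱ^α_t]; i.e., the joint conditional law of (X^1,…,X^m) given ℋ_t factorizes into the product of the single-factor conditional laws. (Proposition 2.14 for deterministic switching patterns.) -/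
/-!
Group the independent sources by factor: `𝒢 α` is generated by `X α` and by the bridges
`β α i` on `[0,1]`. The `𝒢 α` are mutually independent (`iIndep_biSup_fiber`), the variable
`φ α (X α)` is `𝒢 α`-measurable, and `F α t ≤ 𝒢 α` because `J α i u * ξ α i u` is a function of
`X α` and `β α i u`. So everything reduces to an abstract fact,
`condExp_prod_of_iIndep`: for independent `𝒢 α`, sub-σ-algebras `ℋ α ≤ 𝒢 α` and bounded
`𝒢 α`-measurable `f α`, the conditional expectation of `∏ f α` given `⨆ ℋ α` is
`∏ E[f α | ℋ α]`. Since the right side is measurable for `⨆ ℋ α`, it suffices to compare integrals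
over sets of `⨆ ℋ α`. By the π-λ theorem, finite intersections of sets from the `ℋ α` are enough,
and on these both integrals split by independence into a product of one-factor integrals
(`setIntegral_prod_of_iIndep`), which agree by the definition of conditional expectation.
-/

open MeasureTheory ProbabilityTheory Real Set Filter
open scoped ENNReal NNReal Classical

noncomputable section

/-- The Gaussian likelihood function `h(x,y,t,σ) = exp((x·y − t·x²/2)/(σ²·(1−t)))`. -/
def hfun (x y t σ : ℝ) : ℝ := Real.exp ((x * y - t * x ^ 2 / 2) / (σ ^ 2 * (1 - t)))

/-- A process is a centered Gaussian process on `[0,1]` with covariance function `c` if every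
finite real-linear combination of its values at times in `[0,1]` is a centered Gaussian random
variable with the variance induced by `c`. -/
def IsCenteredGaussianCov {Ω : Type*} [MeasurableSpace Ω] (P : Measure Ω)
    (β : ℝ → Ω → ℝ) (c : ℝ → ℝ → ℝ) : Prop :=
  ∀ (k : ℕ) (t : Fin k → ℝ), (∀ i, t i ∈ Set.Icc (0:ℝ) 1) → ∀ a : Fin k → ℝ,
    Measure.map (fun ω => ∑ i, a i * β (t i) ω) P
      = gaussianReal 0 (Real.toNNReal (∑ i, ∑ j, a i * a j * c (t i) (t j)))

/-- A standard Brownian bridge on `[0,1]`: a measurable, path-continuous, centered Gaussian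
process with covariance `min s t − s·t`. -/
def IsStdBrownianBridge {Ω : Type*} [MeasurableSpace Ω] (P : Measure Ω)
    (β : ℝ → Ω → ℝ) : Prop :=
  (∀ t, Measurable (β t)) ∧
  (∀ ω, ContinuousOn (fun t => β t ω) (Set.Icc 0 1)) ∧
  IsCenteredGaussianCov P β (fun s t => min s t - s * t)

/-- `ν` has finite exponential moments. -/
def FiniteExpMoments (ν : Measure ℝ) : Prop :=
  ∀ lam : ℝ, 0 < lam → Integrable (fun x => Real.exp (lam * |x|)) ν

/-- The σ-algebra generated by the observations `ξ_s`, `0 ≤ s ≤ t`. -/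
def sigmaUpTo {Ω : Type*} [MeasurableSpace Ω] (ξ : ℝ → Ω → ℝ) (t : ℝ) : MeasurableSpace Ω :=
  ⨆ s ∈ Set.Icc (0:ℝ) t, MeasurableSpace.comap (ξ s) inferInstance

/-- Independence is preserved by grouping: if the index set is partitioned into the fibres of `p`,
the σ-algebras generated by the groups are independent. -/
lemma iIndep_biSup_fiber {Ω κ ι : Type*} {m0 : MeasurableSpace Ω} {P : Measure Ω}
    {M : κ → MeasurableSpace Ω} (hM : ∀ j, M j ≤ m0) (h : iIndep M P) (p : κ → ι) :
    iIndep (fun a => ⨆ j ∈ {j | p j = a}, M j) P := by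
  have := h.isProbabilityMeasure
  rw [iIndep_iff]
  intro s f
  induction s using Finset.induction_on with
  | empty => simp
  | insert a s ha ih =>
    intro hf
    rw [Finset.prod_insert ha, ← ih fun i hi => hf i (Finset.mem_insert_of_mem hi),
      Finset.set_biInter_insert]
    have hdisj : Disjoint {j | p j = a} {j | p j ∈ s} := by
      rw [Set.disjoint_left]
      rintro j rfl hj
      exact ha hj
    refine (Indep_iff _ _ _).1 (indep_iSup_of_disjoint hM h hdisj) _ _
      (hf a (Finset.mem_insert_self _ _)) ?_
    refine Finset.measurableSet_biInter s fun i hi => ?_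
    have hle : (⨆ j ∈ {j | p j = i}, M j) ≤ ⨆ j ∈ {j | p j ∈ s}, M j :=
      biSup_mono fun j (hj : p j = i) => show p j ∈ s from hj ▸ hi
    exact hle _ (hf i (Finset.mem_insert_of_mem hi))

lemma setIntegral_prod_of_iIndep {Ω ι : Type*} [Fintype ι] {m0 : MeasurableSpace Ω}
    {P : Measure Ω} {G : ι → MeasurableSpace Ω} (hG : ∀ a, G a ≤ m0) (h : iIndep G P)
    {g : ι → Ω → ℝ} (hg : ∀ a, Measurable[G a] (g a))
    {B : ι → Set Ω} (hB : ∀ a, MeasurableSet[G a] (B a)) :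
    ∫ ω in ⋂ a, B a, ∏ a, g a ω ∂P = ∏ a, ∫ ω in B a, g a ω ∂P := by
  have hmeas : ∀ a, Measurable[G a] ((B a).indicator (g a)) := fun a => (hg a).indicator (hB a)
  have hind : iIndepFun (fun a => (B a).indicator (g a)) P := by
    rw [iIndepFun_iff_iIndep]
    exact iIndep_of_iIndep_of_le h fun a => (hmeas a).comap_le
  have key := hind.integral_fun_prod_eq_prod_integral
    fun a => ((hmeas a).mono (hG a) le_rfl).aestronglyMeasurable
  rw [← integral_indicator (MeasurableSet.iInter fun a => hG a _ (hB a))]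
  simp_rw [← fun a => integral_indicator (f := g a) (μ := P) (hG a _ (hB a))]
  rw [← key]
  congr 1
  ext ω
  by_cases hω : ω ∈ ⋂ a, B a
  · rw [Set.indicator_of_mem hω]
    exact Finset.prod_congr rfl fun a _ =>
      (Set.indicator_of_mem (Set.mem_iInter.1 hω a) _).symm
  · rw [Set.indicator_of_notMem hω]
    obtain ⟨a, ha⟩ : ∃ a, ω ∉ B a := by simpa using hω
    exact (Finset.prod_eq_zero (Finset.mem_univ a) (Set.indicator_of_notMem ha _)).symm

/-- Conditional expectations of a product factorize over independent σ-algebras. -/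
lemma condExp_prod_of_iIndep {Ω ι : Type*} [Fintype ι] {m0 : MeasurableSpace Ω}
    {P : Measure Ω} {G : ι → MeasurableSpace Ω} (hG : ∀ a, G a ≤ m0) (h : iIndep G P)
    {H : ι → MeasurableSpace Ω} (hH : ∀ a, H a ≤ G a)
    {f : ι → Ω → ℝ} (hf : ∀ a, Measurable[G a] (f a)) {C : ℝ} (hC : ∀ a ω, |f a ω| ≤ C) :
    P[fun ω => ∏ a, f a ω | ⨆ a, H a] =ᵐ[P] fun ω => ∏ a, (P[f a | H a]) ω := by
  have := h.isProbabilityMeasure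
  have hH0 : ∀ a, H a ≤ m0 := fun a => (hH a).trans (hG a)
  have hle : (⨆ a, H a) ≤ m0 := iSup_le hH0
  have hfi : ∀ a, Integrable (f a) P := fun a =>
    Integrable.of_bound ((hf a).mono (hG a) le_rfl).aestronglyMeasurable C
      (ae_of_all _ fun ω => hC a ω)
  have hbdd : ∀ u : ι → Ω → ℝ, (∀ a, Measurable (u a)) → (∀ᵐ ω ∂P, ∀ a, |u a ω| ≤ C) →
      Integrable (fun ω => ∏ a, u a ω) P := by
    intro u hu hb
    refine Integrable.of_bound (Finset.measurable_prod _ fun a _ => hu a).aestronglyMeasurable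
      (∏ _a : ι, C) ?_
    filter_upwards [hb] with ω hω
    rw [Real.norm_eq_abs, Finset.abs_prod]
    exact Finset.prod_le_prod (fun a _ => abs_nonneg _) fun a _ => hω a
  have hprod : Integrable (fun ω => ∏ a, f a ω) P :=
    hbdd f (fun a => (hf a).mono (hG a) le_rfl) (ae_of_all _ fun ω a => hC a ω)
  have hcm : ∀ a, Measurable[H a] (P[f a | H a]) := fun a => stronglyMeasurable_condExp.measurable
  have hcprod : Integrable (fun ω => ∏ a, (P[f a | H a]) ω) P := by
    refine hbdd _ (fun a => (hcm a).mono (hH0 a) le_rfl) (ae_all_iff.2 fun a => ?_)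
    exact ae_bdd_abs_condExp_of_ae_bdd_abs (m := H a) (ae_of_all P (hC a))
  refine (ae_eq_condExp_of_forall_setIntegral_eq hle hprod (fun s _ _ => hcprod.integrableOn)
    (fun s hs _ => ?_) ?_).symm
  swap
  · exact (Finset.measurable_prod _ fun a _ =>
      (hcm a).mono (le_iSup H a) le_rfl).aestronglyMeasurable
  have hgen : (⨆ a, H a) = MeasurableSpace.generateFrom
      (piiUnionInter (fun a => {s | MeasurableSet[H a] s}) Set.univ) := by
    rw [generateFrom_piiUnionInter_measurableSet H]
    simp
  induction s, hs using MeasurableSpace.induction_on_inter hgen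
    (isPiSystem_piiUnionInter _ (fun a => @MeasurableSpace.isPiSystem_measurableSet Ω (H a)) _) with
  | empty => simp
  | basic s hs =>
    obtain ⟨t, -, A, hA, rfl⟩ := hs
    -- Coordinates outside `t` are unconstrained, so the intersection runs over all of `ι`.
    have hB : ∀ a, MeasurableSet[H a] (⋂ _ : a ∈ t, A a) := fun a =>
      MeasurableSet.iInter fun ha => hA a ha
    rw [setIntegral_prod_of_iIndep hG h (fun a => (hcm a).mono (hH a) le_rfl)
        (fun a => hH a _ (hB a)),
      setIntegral_prod_of_iIndep hG h hf (fun a => hH a _ (hB a))]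
    exact Finset.prod_congr rfl fun a _ => setIntegral_condExp (hH0 a) (hfi a) (hB a)
  | compl s hs ih =>
    have huniv : ∫ ω, ∏ a, (P[f a | H a]) ω ∂P = ∫ ω, ∏ a, f a ω ∂P := by
      have e1 := setIntegral_prod_of_iIndep hG h (fun a => (hcm a).mono (hH a) le_rfl)
        (B := fun _ => Set.univ) (fun a => MeasurableSet.univ)
      have e2 := setIntegral_prod_of_iIndep hG h hf
        (B := fun _ => Set.univ) (fun a => MeasurableSet.univ)
      simp only [Set.iInter_univ, setIntegral_univ] at e1 e2
      rw [e1, e2]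
      exact Finset.prod_congr rfl fun a _ => integral_condExp (hH0 a)
    rw [setIntegral_compl (hle _ hs) hcprod, setIntegral_compl (hle _ hs) hprod,
      ih (measure_lt_top _ _), huniv]
  | iUnion A hdisj hA ih =>
    rw [integral_iUnion (fun i => hle _ (hA i)) hdisj hcprod.integrableOn,
      integral_iUnion (fun i => hle _ (hA i)) hdisj hprod.integrableOn]
    exact tsum_congr fun i => ih i (measure_lt_top _ _)

/-- Proposition 2.14 for deterministic switching patterns.
For `m` mutually independent factors `X^α`, each with its own independent family of bridges and
deterministic switching pattern, the joint conditional law of `(X¹,…,X^m)` given the combined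
modulated information `ℋ_t = σ(ℱ¹_t ∪ ⋯ ∪ ℱ^m_t)` factorizes into the product of the
single-factor conditional laws. -/
theorem multi_factor_conditional_factorization
    {Ω : Type*} [m0 : MeasurableSpace Ω] (P : Measure Ω) [IsProbabilityMeasure P]
    (m : ℕ) (n : Fin m → ℕ)
    (X : Fin m → Ω → ℝ) (hX : ∀ α, Measurable (X α))
    (ν : Fin m → Measure ℝ) (hprob : ∀ α, IsProbabilityMeasure (ν α))
    (hlaw : ∀ α, Measure.map (X α) P = ν α)
    (hν : ∀ α, FiniteExpMoments (ν α))
    (β : (α : Fin m) → Fin (n α) → ℝ → Ω → ℝ)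
    (hβ : ∀ α i, IsStdBrownianBridge P (β α i))
    (σ : (α : Fin m) → Fin (n α) → ℝ) (hσ : ∀ α i, 0 < σ α i)
    (ξ : (α : Fin m) → Fin (n α) → ℝ → Ω → ℝ)
    (hξ : ∀ α i s ω, ξ α i s ω = s * X α ω + σ α i * β α i s ω)
    (hindep : iIndep (fun j : Fin m ⊕ (Σ α : Fin m, Fin (n α)) =>
        Sum.elim (fun α => MeasurableSpace.comap (X α) inferInstance)
          (fun p => sigmaUpTo (β p.1 p.2) 1) j) P)
    (J : (α : Fin m) → Fin (n α) → ℝ → ℝ)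
    (hJ01 : ∀ α i s, J α i s = 0 ∨ J α i s = 1)
    (hrc : ∀ α i s, ContinuousWithinAt (J α i) (Set.Ici s) s)
    (D : Finset ℝ) (hD : ∀ α i, ∀ s ∉ D, ContinuousAt (J α i) s)
    (F : Fin m → ℝ → MeasurableSpace Ω)
    (hF : ∀ α t, F α t
        = ⨆ i, ⨆ u ∈ Set.Icc (0:ℝ) t,
            MeasurableSpace.comap (fun ω => J α i u * ξ α i u ω) inferInstance) :
    ∀ t ∈ Set.Ico (0:ℝ) 1,
      ∀ φ : Fin m → ℝ → ℝ, (∀ α, Measurable (φ α)) →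
      ∀ C : ℝ, (∀ α x, |φ α x| ≤ C) →
      P[fun ω => ∏ α, φ α (X α ω) | ⨆ α, F α t]
        =ᵐ[P] fun ω => ∏ α, (P[fun ω' => φ α (X α ω') | F α t]) ω := by
  intro t ht φ hφ C hC
  let M : Fin m ⊕ (Σ α : Fin m, Fin (n α)) → MeasurableSpace Ω := fun j =>
    Sum.elim (fun α => MeasurableSpace.comap (X α) inferInstance)
      (fun p => sigmaUpTo (β p.1 p.2) 1) j
  have hM : ∀ j, M j ≤ m0 := by
    rintro (α | p)
    · exact (hX α).comap_le
    · exact iSup₂_le fun s _ => ((hβ p.1 p.2).1 s).comap_le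
  -- `q j` is the factor to which the source `j` belongs.
  let q : Fin m ⊕ (Σ α : Fin m, Fin (n α)) → Fin m := Sum.elim id Sigma.fst
  have hG := iIndep_biSup_fiber hM hindep q
  have hXG : ∀ α, Measurable[⨆ j ∈ {j | q j = α}, M j] (X α) := fun α =>
    Measurable.of_comap_le
      (le_iSup₂_of_le (f := fun j (_ : j ∈ {j | q j = α}) => M j) (Sum.inl α) rfl le_rfl)
  have hβG : ∀ α i, ∀ u ∈ Set.Icc (0:ℝ) 1,
      Measurable[⨆ j ∈ {j | q j = α}, M j] (β α i u) := fun α i u hu =>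
    Measurable.of_comap_le <|
      (le_iSup₂ (f := fun s (_ : s ∈ Set.Icc (0:ℝ) 1) =>
        MeasurableSpace.comap (β α i s) inferInstance) u hu).trans
      (le_iSup₂_of_le (f := fun j (_ : j ∈ {j | q j = α}) => M j)
        (Sum.inr ⟨α, i⟩) rfl le_rfl)
  refine condExp_prod_of_iIndep (fun α => iSup₂_le fun j _ => hM j) hG (fun α => ?_)
    (fun α => (hφ α).comp (hXG α)) (fun α ω => hC α (X α ω))
  rw [hF]
  refine iSup_le fun i => iSup₂_le fun u hu => Measurable.comap_le ?_
  simp_rw [hξ]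
  exact (((hXG α).const_mul u).add
    ((hβG α i u ⟨hu.1, hu.2.trans ht.2.le⟩).const_mul (σ α i))).const_mul (J α i u)


end
end

section
/- Let X be a real random variable with law ν having finite exponential moments, let β be a standard Brownian bridge on [0,1] independent of X, σ > 0, ξ_t = t·X + σβ_t, and ℱ_t = σ(ξ_s : 0 ≤ s ≤ t). Define Φ_t = ∫ h(x, ξ_t, t, σ) ν(dx) for t ∈ [0,1). Then Φ_t > 0 almost surely, 1/Φ_t is integrable, and the process (1/Φ_t)_{t∈[0,1)} is an (ℱ_t)-martingale with 1/Φ_0 = 1. (The change-of-measure density martingale used in the proof of Proposition 3.1.) -/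
/-!
The idea is a change of measure: for an event `A = {ξ|[0,s] ∈ B}` of `ℱ_s` and every
`t ∈ [s, 1)`, the weighted probability `E[1_A / Φ_t]` equals `P(σ β|[0,s] ∈ B)`
(`lintegral_inv_likelihood`). The right-hand side does not depend on `t`, so comparing `t` with
`s` gives the martingale property, and `A = Ω` gives integrability, with `E[1/Φ_t] = 1`.

To prove the identity for `t > 0`, write `β_u = (u/t) β_t + γ_u` for `u ≤ s`. The Gaussian process
`γ` is uncorrelated with `β_t`, hence independent of it, and therefore of `(X, β_t)`
(`IsStdBrownianBridge.indepFun_pinned`). Since the drift of `ξ` is linear in time,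
`ξ_u = (u/t) ξ_t + σ γ_u`, and `σ β_u = (u/t) σ β_t + σ γ_u`: both paths are the same function of
their value at time `t` and the common independent process `γ`. So only the two one-dimensional
laws need to be compared. Given `X = x`, `ξ_t` is `N(t x, σ² t (1 - t))`, whose density with
respect to the law `N(0, σ² t (1 - t))` of `σ β_t` is `hfun x · t σ`; averaging over `x ∼ ν`, the
law of `ξ_t` has density `Φ_t` with respect to that of `σ β_t` (`map_observation`), and the weight
`1/Φ_t` cancels it.
-/

open MeasureTheory ProbabilityTheory Real Set Filter
open scoped ENNReal NNReal Classical

noncomputable section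

/-! ### Gaussian facts about the bridge -/

/-- The bridge, restricted to `[0,1]`, is a Gaussian process in Mathlib's sense. -/
lemma IsStdBrownianBridge.isGaussianProcess {Ω : Type*} [MeasurableSpace Ω] {P : Measure Ω}
    {β : ℝ → Ω → ℝ} (hβ : IsStdBrownianBridge P β) :
    IsGaussianProcess (fun u : Set.Icc (0:ℝ) 1 => β u) P where
  hasGaussianLaw I := by
    have hm : Measurable (fun ω => I.restrict fun u : Set.Icc (0:ℝ) 1 => β u ω) :=
      measurable_pi_lambda _ fun i => hβ.1 _
    refine ⟨isGaussian_of_map_eq_gaussianReal fun L => ⟨0, Real.toNNReal (∑ i, ∑ j, L (Pi.single (I.equivFin.symm i) 1) *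
        L (Pi.single (I.equivFin.symm j) 1) *
        (min ((I.equivFin.symm i : Set.Icc (0:ℝ) 1) : ℝ) (I.equivFin.symm j : Set.Icc (0:ℝ) 1)
          - ((I.equivFin.symm i : Set.Icc (0:ℝ) 1) : ℝ) * (I.equivFin.symm j : Set.Icc (0:ℝ) 1))), ?_⟩⟩
    rw [Measure.map_map (by fun_prop) hm, ← hβ.2.2 I.card
      (fun i => ((I.equivFin.symm i : Set.Icc (0:ℝ) 1) : ℝ)) (fun i => Subtype.property _)
      (fun i => L (Pi.single (I.equivFin.symm i) 1))]
    congr 1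
    ext ω
    rw [Function.comp_apply, ← ContinuousLinearMap.coe_coe, LinearMap.pi_apply_eq_sum_univ,
      ← Equiv.sum_comp I.equivFin.symm]
    refine Finset.sum_congr rfl fun i _ => ?_
    rw [smul_eq_mul, mul_comm]
    congr 2
    ext j
    simp [Pi.single_apply, eq_comm]

lemma IsStdBrownianBridge.map_eval {Ω : Type*} [MeasurableSpace Ω] {P : Measure Ω}
    {β : ℝ → Ω → ℝ} (hβ : IsStdBrownianBridge P β) {t : ℝ} (ht : t ∈ Set.Icc (0:ℝ) 1) :
    P.map (β t) = gaussianReal 0 (t * (1 - t)).toNNReal := by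
  have h := hβ.2.2 1 (fun _ => t) (fun _ => ht) (fun _ => 1)
  simp only [Finset.univ_unique, Finset.sum_const, Finset.card_singleton, one_smul, one_mul,
    min_self] at h
  rw [h]
  congr 2
  ring

lemma IsStdBrownianBridge.eval_zero {Ω : Type*} [MeasurableSpace Ω] {P : Measure Ω}
    {β : ℝ → Ω → ℝ} (hβ : IsStdBrownianBridge P β) : ∀ᵐ ω ∂P, β 0 ω = 0 := by
  have h := hβ.map_eval (t := 0) (by simp)
  rw [zero_mul, Real.toNNReal_zero, gaussianReal_zero_var] at h
  have h2 : ∀ᵐ y ∂(P.map (β 0)), y = 0 := by rw [h, ae_dirac_eq]; simp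
  exact ae_of_ae_map (hβ.1 0).aemeasurable h2

lemma IsStdBrownianBridge.memLp_two {Ω : Type*} [MeasurableSpace Ω] {P : Measure Ω}
    {β : ℝ → Ω → ℝ} (hβ : IsStdBrownianBridge P β) {t : ℝ} (ht : t ∈ Set.Icc (0:ℝ) 1) :
    MemLp (β t) 2 P :=
  (hβ.isGaussianProcess.hasGaussianLaw_eval ⟨t, ht⟩).memLp_two

lemma IsStdBrownianBridge.variance_eval {Ω : Type*} [MeasurableSpace Ω] {P : Measure Ω}
    {β : ℝ → Ω → ℝ} (hβ : IsStdBrownianBridge P β) {t : ℝ} (ht : t ∈ Set.Icc (0:ℝ) 1) :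
    Var[β t; P] = t * (1 - t) := by
  rw [← variance_id_map (hβ.1 t).aemeasurable, hβ.map_eval ht, variance_id_gaussianReal,
    Real.coe_toNNReal _ (mul_nonneg ht.1 (by linarith [ht.2]))]

/-- Polarisation: the covariance is read off from the law of `β u + β t`. -/
lemma IsStdBrownianBridge.covariance_eval {Ω : Type*} [MeasurableSpace Ω] {P : Measure Ω}
    [IsProbabilityMeasure P] {β : ℝ → Ω → ℝ} (hβ : IsStdBrownianBridge P β) {u t : ℝ}
    (hu : 0 ≤ u) (hut : u ≤ t) (ht : t ≤ 1) :
    cov[β u, β t; P] = u * (1 - t) := by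
  have hu' : u ∈ Set.Icc (0:ℝ) 1 := ⟨hu, hut.trans ht⟩
  have ht' : t ∈ Set.Icc (0:ℝ) 1 := ⟨hu.trans hut, ht⟩
  have h := hβ.2.2 2 ![u, t] (fun i => by fin_cases i <;> assumption) (fun _ => 1)
  simp only [Fin.sum_univ_two, Matrix.cons_val_zero, Matrix.cons_val_one, one_mul,
    min_self, min_eq_left hut, min_eq_right hut] at h
  have hadd := variance_add (hβ.memLp_two hu') (hβ.memLp_two ht')
  have hv : Var[β u + β t; P] = u - u * u + (u - u * t) + (u - t * u + (t - t * t)) := by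
    rw [← variance_id_map ((hβ.1 u).add (hβ.1 t)).aemeasurable]
    have : (β u + β t) = fun ω => β u ω + β t ω := rfl
    rw [this, h, variance_id_gaussianReal, Real.coe_toNNReal]
    nlinarith [mul_nonneg hu (sub_nonneg.2 ht), mul_nonneg hu (sub_nonneg.2 (hut.trans ht)),
      mul_nonneg (hu.trans hut) (sub_nonneg.2 ht)]
  rw [hv, hβ.variance_eval hu', hβ.variance_eval ht'] at hadd
  linarith

/-! ### Decomposition of the bridge before time `t` -/

/-- The process `u ↦ β u - (u/t) β t` on `[0,s]`, meant for `s ≤ t`: the orthogonal projection of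
`β u` on the complement of `β t`, since `Cov(β u, β t) = u (1 - t)` and `Var (β t) = t (1 - t)`.
It is a bridge pinned at time `t` instead of `1`. -/
def pinned {Ω : Type*} (β : ℝ → Ω → ℝ) (s t : ℝ) (ω : Ω) (u : Set.Icc (0:ℝ) s) : ℝ :=
  β u ω - u / t * β t ω

lemma measurable_prodMk_pinned {Ω : Type*} {m : MeasurableSpace Ω} {β : ℝ → Ω → ℝ} {s t : ℝ}
    (ht : Measurable (β t)) (hs : ∀ u : Set.Icc (0:ℝ) s, Measurable (β u)) :
    Measurable fun ω => (β t ω, pinned β s t ω) :=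
  ht.prodMk (measurable_pi_lambda _ fun u => (hs u).sub (ht.const_mul _))

lemma measurable_pinned {Ω : Type*} [MeasurableSpace Ω] {β : ℝ → Ω → ℝ}
    (hβ : ∀ t, Measurable (β t)) (s t : ℝ) : Measurable (pinned β s t) :=
  measurable_snd.comp (measurable_prodMk_pinned (hβ t) fun u => hβ u)

/-- The two are jointly Gaussian and uncorrelated. -/
lemma IsStdBrownianBridge.indepFun_pinned {Ω : Type*} [MeasurableSpace Ω] {P : Measure Ω}
    [IsProbabilityMeasure P] {β : ℝ → Ω → ℝ} (hβ : IsStdBrownianBridge P β) {s t : ℝ}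
    (hst : s ≤ t) (ht0 : 0 < t) (ht : t ≤ 1) :
    IndepFun (β t) (pinned β s t) P := by
  have htm : t ∈ Set.Icc (0:ℝ) 1 := ⟨ht0.le, ht⟩
  have hum : ∀ u : Set.Icc (0:ℝ) s, (u : ℝ) ∈ Set.Icc (0:ℝ) 1 := fun u =>
    ⟨u.2.1, u.2.2.trans (hst.trans ht)⟩
  have hG : IsGaussianProcess (Sum.elim (fun _ : Unit => β t)
      (fun (u : Set.Icc (0:ℝ) s) ω => pinned β s t ω u)) P := by
    refine hβ.isGaussianProcess.of_isGaussianProcess ?_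
    rintro (_ | u)
    · exact ⟨{⟨t, htm⟩}, .proj ⟨⟨t, htm⟩, by simp⟩, fun ω => rfl⟩
    · exact ⟨{⟨t, htm⟩, ⟨u, hum u⟩}, .proj ⟨⟨u, hum u⟩, by simp⟩ -
        ((u : ℝ) / t) • .proj ⟨⟨t, htm⟩, by simp⟩, fun ω => rfl⟩
  have hI := hG.indepFun_of_covariance_eq_zero (fun _ => (hβ.1 t).aemeasurable)
    (fun u => ((hβ.1 u).sub ((hβ.1 t).const_mul _)).aemeasurable) (fun _ u => by
      rw [covariance_comm]
      change cov[fun ω => β u ω - u / t * β t ω, β t; P] = 0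
      rw [covariance_fun_sub_left (hβ.memLp_two (hum u)) ((hβ.memLp_two htm).const_mul _)
        (hβ.memLp_two htm), covariance_const_mul_left,
        hβ.covariance_eval u.2.1 (u.2.2.trans hst) ht, hβ.covariance_eval ht0.le le_rfl ht]
      field_simp
      ring)
  exact hI.comp (φ := fun x : Unit → ℝ => x ()) (ψ := id) (by fun_prop) measurable_id

/-! ### The likelihood and the law of one observation -/

/-- Since `t x² / 2 ≥ 0`, the integrand is at most `exp (λ |x|)` with `λ` linear in `|y|`; the
summand `1` in the chosen `λ` keeps it positive when `y = 0`. -/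
lemma integrable_hfun {ν : Measure ℝ} [IsProbabilityMeasure ν] (hν : FiniteExpMoments ν)
    (y : ℝ) {t σ : ℝ} (ht0 : 0 ≤ t) (ht1 : t < 1) (hσ : 0 < σ) :
    Integrable (fun x => hfun x y t σ) ν := by
  have hD : 0 < σ ^ 2 * (1 - t) := mul_pos (pow_pos hσ 2) (by linarith)
  refine (hν ((|y| + 1) / (σ ^ 2 * (1 - t))) (by positivity)).mono'
    (by unfold hfun; fun_prop) (ae_of_all _ fun x => ?_)
  unfold hfun
  rw [Real.norm_eq_abs, Real.abs_exp, div_mul_eq_mul_div]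
  gcongr
  have h1 : x * y ≤ |y| * |x| := by rw [mul_comm, ← abs_mul]; exact le_abs_self _
  nlinarith [mul_nonneg ht0 (sq_nonneg x), abs_nonneg x]

/-- The likelihood `Φ_t = likelihood ν σ t ξ_t` as a function of the observed value `y = ξ_t`. -/
def likelihood (ν : Measure ℝ) (σ t y : ℝ) : ℝ := ∫ x, hfun x y t σ ∂ν

lemma likelihood_pos {ν : Measure ℝ} [IsProbabilityMeasure ν] (hν : FiniteExpMoments ν)
    (y : ℝ) {t σ : ℝ} (ht0 : 0 ≤ t) (ht1 : t < 1) (hσ : 0 < σ) : 0 < likelihood ν σ t y :=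
  integral_exp_pos (integrable_hfun hν y ht0 ht1 hσ)

lemma measurable_likelihood (ν : Measure ℝ) [IsProbabilityMeasure ν] (σ t : ℝ) :
    Measurable (likelihood ν σ t) := by
  refine StronglyMeasurable.measurable (StronglyMeasurable.integral_prod_right
    (f := fun y x => hfun x y t σ) ?_)
  have : Measurable (Function.uncurry fun y x => hfun x y t σ) := by
    unfold hfun Function.uncurry; fun_prop
  exact this.stronglyMeasurable

/-- `hfun x · t σ` is the density of `N(t x, σ² t (1 - t))` with respect to
`N(0, σ² t (1 - t))`. -/
lemma gaussianPDF_shift (x y : ℝ) {t σ : ℝ} (ht0 : 0 < t) (ht1 : t < 1) (hσ : 0 < σ) :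
    gaussianPDF (t * x) (σ ^ 2 * (t * (1 - t))).toNNReal y =
      gaussianPDF 0 (σ ^ 2 * (t * (1 - t))).toNNReal y * ENNReal.ofReal (hfun x y t σ) := by
  have h1 : 0 < 1 - t := by linarith
  have hv : 0 < σ ^ 2 * (t * (1 - t)) := by positivity
  unfold gaussianPDF
  rw [← ENNReal.ofReal_mul (gaussianPDFReal_nonneg _ _ _)]
  congr 1
  unfold gaussianPDFReal hfun
  rw [mul_assoc (_)⁻¹, ← Real.exp_add, Real.coe_toNNReal _ hv.le]
  congr 2
  field_simp
  ring

/-- One-dimensional case of the change of measure, for `X ∼ ν` and `β_t ∼ N(0, t (1 - t))`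
independent. Conditionally on `X = x`, the value `t X + σ β_t` is `N(t x, σ² t (1 - t))`; mixing over `x`
multiplies the law `N(0, σ² t (1 - t))` of `σ β_t` by the likelihood. -/
lemma map_observation {ν : Measure ℝ} [IsProbabilityMeasure ν] (hν : FiniteExpMoments ν)
    {t σ : ℝ} (ht0 : 0 < t) (ht1 : t < 1) (hσ : 0 < σ) :
    (ν.prod (gaussianReal 0 (t * (1 - t)).toNNReal)).map (fun p => t * p.1 + σ * p.2) =
      ((gaussianReal 0 (t * (1 - t)).toNNReal).map (fun b => σ * b)).withDensity
        (fun y => ENNReal.ofReal (likelihood ν σ t y)) := by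
  have h1 : 0 < 1 - t := by linarith
  have hv : 0 < σ ^ 2 * (t * (1 - t)) := by positivity
  have hvn : (σ ^ 2 * (t * (1 - t))).toNNReal ≠ 0 := (Real.toNNReal_pos.2 hv).ne'
  have hscale : (gaussianReal 0 (t * (1 - t)).toNNReal).map (fun b => σ * b) =
      gaussianReal 0 (σ ^ 2 * (t * (1 - t))).toNNReal := by
    rw [gaussianReal_map_const_mul, mul_zero, Real.toNNReal_mul (sq_nonneg σ)]
    congr 2
    ext
    simp [sq_nonneg]
  have hLm : Measurable fun y => ENNReal.ofReal (likelihood ν σ t y) :=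
    (measurable_likelihood ν σ t).ennreal_ofReal
  have hhm : Measurable (Function.uncurry fun x y => ENNReal.ofReal (hfun x y t σ)) := by
    unfold hfun Function.uncurry; fun_prop
  rw [hscale]
  ext C hC
  have hF : Measurable fun p : ℝ × ℝ => t * p.1 + σ * p.2 := by fun_prop
  rw [Measure.map_apply hF hC, Measure.prod_apply (hF hC)]
  have hx : ∀ x, gaussianReal 0 (t * (1 - t)).toNNReal
      (Prod.mk x ⁻¹' ((fun p : ℝ × ℝ => t * p.1 + σ * p.2) ⁻¹' C)) =
      ∫⁻ y in C, gaussianPDF 0 (σ ^ 2 * (t * (1 - t))).toNNReal y *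
        ENNReal.ofReal (hfun x y t σ) := by
    intro x
    have : (gaussianReal 0 (t * (1 - t)).toNNReal).map (fun b => t * x + σ * b) =
        gaussianReal (t * x) (σ ^ 2 * (t * (1 - t))).toNNReal := by
      have hc : (fun b => t * x + σ * b) = (fun y => t * x + y) ∘ (fun b => σ * b) := rfl
      rw [hc, ← Measure.map_map (by fun_prop) (by fun_prop), hscale,
        gaussianReal_map_const_add, zero_add]
    simp_rw [← gaussianPDF_shift x _ ht0 ht1 hσ]
    rw [← gaussianReal_apply _ hvn, ← this, Measure.map_apply (by fun_prop) hC]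
    rfl
  simp_rw [hx]
  rw [lintegral_lintegral_swap, withDensity_apply _ hC, gaussianReal_of_var_ne_zero _ hvn,
    setLIntegral_withDensity_eq_setLIntegral_mul _ (measurable_gaussianPDF _ _) hLm hC]
  · refine lintegral_congr fun y => ?_
    rw [Pi.mul_apply, lintegral_const_mul _
        (show Measurable fun x => ENNReal.ofReal (hfun x y t σ) by unfold hfun; fun_prop),
      likelihood, ofReal_integral_eq_lintegral_ofReal (integrable_hfun hν y ht0.le ht1 hσ)
        (ae_of_all _ fun x => (Real.exp_pos _).le)]
  · exact (((measurable_gaussianPDF _ _).comp measurable_snd).mul hhm).aemeasurable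

/-! ### Change of measure on path space -/

/-- Events of `ℱ_s` are preimages of measurable sets of paths on `[0,s]`. -/
lemma sigmaUpTo_eq_comap {Ω : Type*} [MeasurableSpace Ω] (ξ : ℝ → Ω → ℝ) (s : ℝ) :
    sigmaUpTo ξ s =
      MeasurableSpace.comap (fun ω (u : Set.Icc (0:ℝ) s) => ξ u ω) inferInstance := by
  unfold sigmaUpTo MeasurableSpace.pi
  rw [MeasurableSpace.comap_iSup, iSup_subtype']
  simp_rw [MeasurableSpace.comap_comp]
  rfl

/-- The joint law of `(ξ_t, pinned part)` has density `Φ_t` with respect to that of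
`(σ β_t, pinned part)`. -/
lemma map_observation_pinned {Ω : Type*} [m0 : MeasurableSpace Ω] {P : Measure Ω}
    [IsProbabilityMeasure P] {X : Ω → ℝ} (hX : Measurable X)
    {ν : Measure ℝ} [IsProbabilityMeasure ν] (hlaw : Measure.map X P = ν)
    (hν : FiniteExpMoments ν) {β : ℝ → Ω → ℝ} (hβ : IsStdBrownianBridge P β)
    (hindep : Indep (MeasurableSpace.comap X inferInstance) (sigmaUpTo β 1) P)
    {σ : ℝ} (hσ : 0 < σ) {s t : ℝ} (hst : s ≤ t) (ht0 : 0 < t) (ht1 : t < 1) :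
    P.map (fun ω => (t * X ω + σ * β t ω, pinned β s t ω)) =
      (P.map (fun ω => (σ * β t ω, pinned β s t ω))).withDensity
        (fun z => ENNReal.ofReal (likelihood ν σ t z.1)) := by
  have hpm := measurable_pinned hβ.1 s t
  have htm : t ∈ Set.Icc (0:ℝ) 1 := ⟨ht0.le, ht1.le⟩
  have hpair : Measurable fun ω => (β t ω, pinned β s t ω) := (hβ.1 t).prodMk hpm
  have hev : ∀ u ∈ Set.Icc (0:ℝ) 1, Measurable[sigmaUpTo β 1] (β u) := fun u hu =>
    (comap_measurable (β u)).mono (le_iSup₂_of_le u hu le_rfl) le_rfl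
  have hXI : IndepFun X (fun ω => (β t ω, pinned β s t ω)) P := by
    rw [IndepFun_iff_Indep]
    refine indep_of_indep_of_le_right hindep (Measurable.comap_le ?_)
    exact measurable_prodMk_pinned (m := sigmaUpTo β 1) (hev t htm)
      fun u => hev u ⟨u.2.1, u.2.2.trans (hst.trans ht1.le)⟩
  have hprod : P.map (fun ω => (β t ω, pinned β s t ω)) =
      (gaussianReal 0 (t * (1 - t)).toNNReal).prod (P.map (pinned β s t)) := by
    rw [(hβ.indepFun_pinned hst ht0 ht1.le).map_prod_eq_prod_map_map (hβ.1 t).aemeasurable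
      hpm.aemeasurable, hβ.map_eval htm]
  have := Measure.isProbabilityMeasure_map (μ := P) hpm.aemeasurable
  have htriple : P.map (fun ω => ((X ω, β t ω), pinned β s t ω)) =
      (ν.prod (gaussianReal 0 (t * (1 - t)).toNNReal)).prod (P.map (pinned β s t)) := by
    have h := hXI.map_prod_eq_prod_map_map hX.aemeasurable hpair.aemeasurable
    rw [hlaw, hprod, ← Measure.prodAssoc_prod] at h
    have h' := congrArg (Measure.map MeasurableEquiv.prodAssoc.symm) h
    rw [Measure.map_map (by fun_prop) (hX.prodMk hpair),
      Measure.map_map (by fun_prop) (by fun_prop)] at h'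
    simpa [Function.comp_def, MeasurableEquiv.prodAssoc] using h'
  have hl : P.map (fun ω => (t * X ω + σ * β t ω, pinned β s t ω)) =
      ((ν.prod (gaussianReal 0 (t * (1 - t)).toNNReal)).map
        (fun p => t * p.1 + σ * p.2)).prod (P.map (pinned β s t)) := by
    conv_rhs => rw [← Measure.map_id (μ := P.map (pinned β s t))]
    rw [Measure.map_prod_map _ _ (by fun_prop) measurable_id, ← htriple,
      Measure.map_map (by fun_prop) ((hX.prodMk (hβ.1 t)).prodMk hpm)]
    rfl
  have hr : P.map (fun ω => (σ * β t ω, pinned β s t ω)) =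
      ((gaussianReal 0 (t * (1 - t)).toNNReal).map
        (fun b => σ * b)).prod (P.map (pinned β s t)) := by
    conv_rhs => rw [← Measure.map_id (μ := P.map (pinned β s t))]
    rw [Measure.map_prod_map _ _ (by fun_prop) measurable_id, ← hprod,
      Measure.map_map (by fun_prop) hpair]
    rfl
  rw [hl, hr, map_observation hν ht0 ht1 hσ,
    prod_withDensity_left (measurable_likelihood ν σ t).ennreal_ofReal]

/-- Change of measure: weighting by `1/Φ_t` turns the law of the observations up to time
`s ≤ t` into the law of `σ β`, whatever `t` is. -/
lemma lintegral_inv_likelihood {Ω : Type*} [m0 : MeasurableSpace Ω] {P : Measure Ω}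
    [IsProbabilityMeasure P] {X : Ω → ℝ} (hX : Measurable X)
    {ν : Measure ℝ} [IsProbabilityMeasure ν] (hlaw : Measure.map X P = ν)
    (hν : FiniteExpMoments ν) {β : ℝ → Ω → ℝ} (hβ : IsStdBrownianBridge P β)
    (hindep : Indep (MeasurableSpace.comap X inferInstance) (sigmaUpTo β 1) P)
    {σ : ℝ} (hσ : 0 < σ) {s t : ℝ} (hs : 0 ≤ s) (hst : s ≤ t) (ht1 : t < 1)
    {B : Set (Set.Icc (0:ℝ) s → ℝ)} (hB : MeasurableSet B) :
    ∫⁻ ω in (fun ω (u : Set.Icc (0:ℝ) s) => (u : ℝ) * X ω + σ * β u ω) ⁻¹' B,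
      ENNReal.ofReal (likelihood ν σ t (t * X ω + σ * β t ω))⁻¹ ∂P =
      P ((fun ω (u : Set.Icc (0:ℝ) s) => σ * β u ω) ⁻¹' B) := by
  have hmeas : Measurable (fun ω (u : Set.Icc (0:ℝ) s) => (u : ℝ) * X ω + σ * β u ω) :=
    measurable_pi_lambda _ fun u => (hX.const_mul _).add ((hβ.1 u).const_mul _)
  rcases (hs.trans hst).eq_or_lt with rfl | ht0
  -- For `t = 0` the pinned part is undefined, but `β_0 = 0` almost surely and `Φ_0 = 1`.
  · obtain rfl : s = 0 := le_antisymm hst hs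
    have hu : ∀ u : Set.Icc (0:ℝ) 0, (u : ℝ) = 0 := fun u => le_antisymm u.2.2 u.2.1
    have h1 : ∀ᵐ ω ∂P, ENNReal.ofReal (likelihood ν σ 0 (0 * X ω + σ * β 0 ω))⁻¹ = 1 := by
      filter_upwards [hβ.eval_zero] with ω hω
      simp [hω, likelihood, hfun]
    rw [lintegral_congr_ae (ae_restrict_of_ae h1), setLIntegral_one]
    simp_rw [hu, zero_mul, zero_add]
  · have hpm := measurable_pinned hβ.1 s t
    -- Both paths are the same function of their value at `t` and the pinned part.
    let T : ℝ × (Set.Icc (0:ℝ) s → ℝ) → (Set.Icc (0:ℝ) s → ℝ) :=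
      fun z u => (u : ℝ) / t * z.1 + σ * z.2 u
    have hT : Measurable T := by
      refine measurable_pi_lambda _ fun u => ?_
      exact (measurable_fst.const_mul _).add
        (((measurable_pi_apply u).comp measurable_snd).const_mul _)
    have hL := measurable_likelihood ν σ t
    let G : ℝ × (Set.Icc (0:ℝ) s → ℝ) → ℝ≥0∞ := fun z =>
      (T ⁻¹' B).indicator (fun z => ENNReal.ofReal (likelihood ν σ t z.1)⁻¹) z
    have hG : Measurable G :=
      (hL.comp measurable_fst).inv.ennreal_ofReal.indicator (hT hB)
    have e1 : ∀ ω, T (t * X ω + σ * β t ω, pinned β s t ω) =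
        fun u : Set.Icc (0:ℝ) s => (u : ℝ) * X ω + σ * β u ω := by
      intro ω; ext u; simp only [T, pinned]; field_simp; ring
    have e2 : ∀ ω, T (σ * β t ω, pinned β s t ω) =
        fun u : Set.Icc (0:ℝ) s => σ * β u ω := by
      intro ω; ext u; simp only [T, pinned]; field_simp; ring
    have hm1 : Measurable fun ω => (t * X ω + σ * β t ω, pinned β s t ω) :=
      ((hX.const_mul _).add ((hβ.1 t).const_mul _)).prodMk hpm
    have hm2 : Measurable fun ω => (σ * β t ω, pinned β s t ω) :=
      ((hβ.1 t).const_mul _).prodMk hpm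
    have hm3 : Measurable fun ω (u : Set.Icc (0:ℝ) s) => σ * β u ω :=
      measurable_pi_lambda _ fun u => (hβ.1 u).const_mul _
    have hL1 : Measurable fun z : ℝ × (Set.Icc (0:ℝ) s → ℝ) =>
        ENNReal.ofReal (likelihood ν σ t z.1) := (hL.comp measurable_fst).ennreal_ofReal
    calc _ = ∫⁻ ω, G (t * X ω + σ * β t ω, pinned β s t ω) ∂P := by
          rw [← lintegral_indicator (hmeas hB)]
          refine lintegral_congr fun ω => ?_
          simp only [G, Set.indicator, Set.mem_preimage, e1]
      _ = ∫⁻ ω, ENNReal.ofReal (likelihood ν σ t (σ * β t ω)) *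
            G (σ * β t ω, pinned β s t ω) ∂P := by
          -- The Radon–Nikodym density `Φ_t` of the law of `(ξ_t, pinned part)` appears here and
          -- cancels the weight `1/Φ_t` contained in `G` in the next step.
          rw [← lintegral_map hG hm1,
            map_observation_pinned hX hlaw hν hβ hindep hσ hst ht0 ht1,
            lintegral_withDensity_eq_lintegral_mul _ hL1 hG,
            lintegral_map (hL1.mul hG) hm2]
          rfl
      _ = ∫⁻ ω, ((fun ω (u : Set.Icc (0:ℝ) s) => σ * β u ω) ⁻¹' B).indicator 1 ω ∂P := by
          refine lintegral_congr fun ω => ?_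
          have hp := likelihood_pos hν (σ * β t ω) ht0.le ht1 hσ
          simp only [G, Set.indicator, Set.mem_preimage, e2]
          split_ifs
          · rw [← ENNReal.ofReal_mul hp.le, mul_inv_cancel₀ hp.ne']
            simp
          · simp
      _ = _ := lintegral_indicator_one (hm3 hB)

/-! ### The martingale property -/

/-- change-of-measure density martingale from the proof of Proposition 3.1.
With `Φ_t = ∫ h(x, ξ_t, t, σ) ν(dx)`, one has `Φ_t > 0` a.s., `1/Φ_t` is integrable, and
`(1/Φ_t)_{t∈[0,1)}` is an `(ℱ_t)`-martingale started at `1/Φ_0 = 1`. -/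
theorem density_martingale
    {Ω : Type*} [m0 : MeasurableSpace Ω] (P : Measure Ω) [IsProbabilityMeasure P]
    (X : Ω → ℝ) (hX : Measurable X)
    (ν : Measure ℝ) [IsProbabilityMeasure ν] (hlaw : Measure.map X P = ν)
    (hν : FiniteExpMoments ν)
    (β : ℝ → Ω → ℝ) (hβ : IsStdBrownianBridge P β)
    (hindep : Indep (MeasurableSpace.comap X inferInstance) (sigmaUpTo β 1) P)
    (σ : ℝ) (hσ : 0 < σ)
    (ξ : ℝ → Ω → ℝ) (hξ : ∀ t ω, ξ t ω = t * X ω + σ * β t ω)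
    (Φ : ℝ → Ω → ℝ) (hΦ : ∀ t ω, Φ t ω = ∫ x, hfun x (ξ t ω) t σ ∂ν) :
    (∀ t ∈ Set.Ico (0:ℝ) 1, ∀ᵐ ω ∂P, 0 < Φ t ω) ∧
    (∀ t ∈ Set.Ico (0:ℝ) 1, Integrable (fun ω => (Φ t ω)⁻¹) P) ∧
    (∀ s t : ℝ, 0 ≤ s → s ≤ t → t < 1 →
      (P[fun ω => (Φ t ω)⁻¹ | sigmaUpTo ξ s]) =ᵐ[P] fun ω => (Φ s ω)⁻¹) ∧
    (∀ᵐ ω ∂P, (Φ 0 ω)⁻¹ = 1) := by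
  obtain rfl : ξ = fun t ω => t * X ω + σ * β t ω := funext₂ hξ
  obtain rfl : Φ = fun t ω => likelihood ν σ t (t * X ω + σ * β t ω) := funext₂ hΦ
  have hξm : ∀ t, Measurable fun ω => t * X ω + σ * β t ω := fun t =>
    (hX.const_mul _).add ((hβ.1 t).const_mul _)
  have hpos : ∀ t, 0 ≤ t → t < 1 → ∀ ω, 0 < likelihood ν σ t (t * X ω + σ * β t ω) :=
    fun t h0 h1 ω => likelihood_pos hν _ h0 h1 hσ
  have hm : ∀ t, Measurable fun ω => (likelihood ν σ t (t * X ω + σ * β t ω))⁻¹ := fun t =>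
    ((measurable_likelihood ν σ t).comp (hξm t)).inv
  have key := fun {s t : ℝ} (hs : 0 ≤ s) (hst : s ≤ t) (ht1 : t < 1) {B} hB =>
    lintegral_inv_likelihood hX hlaw hν hβ hindep hσ hs hst ht1 (B := B) hB
  have hint : ∀ t, 0 ≤ t → t < 1 →
      Integrable (fun ω => (likelihood ν σ t (t * X ω + σ * β t ω))⁻¹) P := by
    intro t h0 h1
    refine ⟨(hm t).aestronglyMeasurable, ?_⟩
    rw [hasFiniteIntegral_iff_ofReal (ae_of_all _ fun ω => (inv_pos.2 (hpos t h0 h1 ω)).le)]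
    have h := key h0 le_rfl h1 (B := Set.univ) MeasurableSet.univ
    simp only [Set.preimage_univ, Measure.restrict_univ, measure_univ] at h
    rw [h]
    exact ENNReal.one_lt_top
  refine ⟨fun t ht => ae_of_all _ (hpos t ht.1 ht.2), fun t ht => hint t ht.1 ht.2, ?_, ?_⟩
  · intro s t hs hst ht1
    have hle : sigmaUpTo (fun t ω => t * X ω + σ * β t ω) s ≤ m0 :=
      iSup₂_le fun u _ => (hξm u).comap_le
    refine (ae_eq_condExp_of_forall_setIntegral_eq hle (hint t (hs.trans hst) ht1)
      (fun _ _ _ => (hint s hs (hst.trans_lt ht1)).integrableOn) ?_ ?_).symm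
    · intro A hA _
      rw [sigmaUpTo_eq_comap] at hA
      obtain ⟨B, hB, rfl⟩ := hA
      rw [integral_eq_lintegral_of_nonneg_ae
          (ae_of_all _ fun ω => (inv_pos.2 (hpos s hs (hst.trans_lt ht1) ω)).le)
          (hm s).aestronglyMeasurable,
        integral_eq_lintegral_of_nonneg_ae
          (ae_of_all _ fun ω => (inv_pos.2 (hpos t (hs.trans hst) ht1 ω)).le)
          (hm t).aestronglyMeasurable,
        key hs le_rfl (hst.trans_lt ht1) hB, key hs hst ht1 hB]
    · have hξs : Measurable[sigmaUpTo (fun t ω => t * X ω + σ * β t ω) s]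
          (fun ω => s * X ω + σ * β s ω) :=
        (comap_measurable _).mono
          (le_iSup₂_of_le (f := fun u (_ : u ∈ Set.Icc (0:ℝ) s) =>
            MeasurableSpace.comap (fun ω => u * X ω + σ * β u ω) inferInstance)
            s ⟨hs, le_rfl⟩ le_rfl) le_rfl
      exact (((measurable_likelihood ν σ s).comp hξs).inv).stronglyMeasurable.aestronglyMeasurable
  · filter_upwards [hβ.eval_zero] with ω hω
    simp [hω, likelihood, hfun]

end
end

section
/- Let X be a real random variable with compactly supported law ν that is not a Dirac mass, let β^(1),…,β^(n) be mutually independent standard Brownian bridges on [0,1] independent of X, σ_1,…,σ_n > 0, and ξ^(i)_t = t·X + σ_i β^(i)_t. Let κ be a random variable with values in 𝕊 = {0,1}^n ∖ {0}, independent of X and of all the bridges. For k ∈ 𝕊 write σ̂(k) = (∑_{i:k_i=1} σ_i^{-2})^{-1/2} and ξ̂_t(k) = σ̂(k)² ∑_{i:k_i=1} σ_i^{-2} ξ^(i)_t. Fix t ∈ (0,1), discount factors P_{0t}, P_{t1} ∈ (0,1], and a strike K > 0 such that P_{t1}·x − K changes sign on the support of ν. For each k ∈ 𝕊 let ς̂(k)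 be the unique real number satisfying ∫ (P_{t1}x − K)·exp((x·ς̂(k) − t x²/2)/(σ̂(k)²(1−t))) ν(dx) = 0, and set ẑ_t(k) = ς̂(k)/(σ̂(k)·√(t(1−t))). Then the price C_0 = P_{0t}·E[(P_{t1}·E[X | σ(ξ̂_t(κ), κ)] − K)^+] of a European call with strike K and exercise date t satisfies C_0 = P_{0t} ∑_{k∈𝕊} ℙ(κ = k) ∫ (P_{t1}·x − K)·𝒩(−ẑ_t(k) + x√t/(σ̂(k)√(1−t))) ν(dx), where 𝒩 is the standard normal distribution function. (Proposition 3.1: the option price is a mixture over information-state configurations of Black–Scholes–Merton-type prices.) -/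
/-!
Write `Z = Pt1 * X - K` and let `m` be the σ-algebra of the pair `(ξhat κ, κ)`. The proof needs no
Bayes formula for `P[X | m]`: since `∫ (P[Z | m])⁺` is the largest value of `∫ Z` over
`m`-measurable events, it suffices to exhibit the maximizing event, the optimal exercise event
(`integral_max_condExp_eq_of_forall_le`).

The candidate is `A = {ς κ < ξhat κ}`. On `{κ = k}` the signal is `ξhat k = t * X + B`, where the
noise `B` is centered Gaussian with variance `t * (σhat k ^ 2 * (1 - t))` and `(X, B)` is
independent of `κ` (`noise_law_and_indep`). Hence `∫ Z` over `{κ = k, ξhat k ∈ S}` is `P (κ = k)` times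
the integral of `x ↦ Pt1 * x - K` against the `N(t x, ·)`-mass of `S` (`setIntegral_signal`).
By Fubini the latter is an integral over `S` of a positive Gaussian density times
`g y = ∫ (Pt1 * x - K) * exp ((x * y - t * x ^ 2 / 2) / (σhat k ^ 2 * (1 - t))) ∂ν`
(`integral_payoff_mul_gaussian`). The function `g` vanishes at `ς k` and, because the payoff changes
sign from minus to plus at `K / Pt1`, it is nonpositive to the left of `ς k` and nonnegative to the
right (`payoffTransform_nonpos`, `payoffTransform_nonneg`). So `S = (ς k, ∞)` is optimal for each
`k`, and evaluating the Gaussian mass of that half-line (`gaussianReal_real_Ioi`) gives the formula.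
-/

open MeasureTheory ProbabilityTheory Real Set Filter
open scoped ENNReal NNReal Classical

noncomputable section

/-! ### Optimal exercise events -/

/-- The positive part of a conditional expectation integrates to the largest value of `∫ Z` over
`m`-measurable events: the bound `≤` compares with `{0 < P[Z | m]}`, and `≥` holds for any event. -/
theorem integral_max_condExp_eq_of_forall_le {Ω : Type*} {m m0 : MeasurableSpace Ω}
    (hm : m ≤ m0) (P : Measure Ω) [IsProbabilityMeasure P] {Z : Ω → ℝ} (hZ : Integrable Z P)
    {A : Set Ω} (hA : MeasurableSet[m] A)
    (hmax : ∀ B, MeasurableSet[m] B → ∫ ω in B, Z ω ∂P ≤ ∫ ω in A, Z ω ∂P) :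
    ∫ ω, max ((P[Z | m]) ω) 0 ∂P = ∫ ω in A, Z ω ∂P := by
  have hB : MeasurableSet[m] {ω | 0 < (P[Z | m]) ω} :=
    measurableSet_lt measurable_const stronglyMeasurable_condExp.measurable
  apply le_antisymm
  · have h : ∫ ω, max ((P[Z | m]) ω) 0 ∂P = ∫ ω in {ω | 0 < (P[Z | m]) ω}, (P[Z | m]) ω ∂P := by
      rw [← integral_indicator (hm _ hB)]
      congr 1 with ω
      by_cases h : 0 < (P[Z | m]) ω
      · simp [h, h.le]
      · simp [h, not_lt.mp h]
    rw [h, setIntegral_condExp hm hZ hB]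
    exact hmax _ hB
  · rw [← setIntegral_condExp hm hZ hA, ← integral_indicator (hm _ hA)]
    refine integral_mono (integrable_condExp.indicator (hm _ hA)) integrable_condExp.pos_part ?_
    intro ω
    by_cases h : ω ∈ A <;> simp [h]

/-! ### Sign of the conditional expected payoff -/

theorem integrable_of_continuous_of_compl_null {ν : Measure ℝ} [IsFiniteMeasure ν]
    (hcs : ∃ K : Set ℝ, IsCompact K ∧ ν Kᶜ = 0) {f : ℝ → ℝ} (hf : Continuous f) :
    Integrable f ν := by
  obtain ⟨K, hK, h0⟩ := hcs
  have h := hf.continuousOn.integrableOn_compact (μ := ν) hK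
  rwa [IntegrableOn, Measure.restrict_eq_self_of_ae_mem] at h
  exact mem_ae_iff.mpr h0

/-- The payoff `a * x - c` and the increment of `x ↦ exp (u * x + r)` from the point `c / a` have the
same sign when `0 ≤ u`. -/
theorem mul_exp_le_mul_exp {a c r x u : ℝ} (ha : 0 < a) (hu : 0 ≤ u) :
    (a * x - c) * rexp (u * (c / a) + r) ≤ (a * x - c) * rexp (u * x + r) := by
  rcases le_total (c / a) x with h | h
  · have h1 : 0 ≤ a * x - c := by rw [div_le_iff₀ ha] at h; linarith
    gcongr
  · have h1 : a * x - c ≤ 0 := by rw [le_div_iff₀ ha] at h; linarith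
    apply mul_le_mul_of_nonpos_left _ h1
    gcongr

/-- The counterpart of `mul_exp_le_mul_exp` for a decreasing exponential. -/
theorem mul_exp_le_mul_exp' {a c r x u : ℝ} (ha : 0 < a) (hu : u ≤ 0) :
    (a * x - c) * rexp (u * x + r) ≤ (a * x - c) * rexp (u * (c / a) + r) := by
  rcases le_total (c / a) x with h | h
  · have h1 : 0 ≤ a * x - c := by rw [div_le_iff₀ ha] at h; linarith
    apply mul_le_mul_of_nonneg_left _ h1
    rw [Real.exp_le_exp]; nlinarith
  · have h1 : a * x - c ≤ 0 := by rw [le_div_iff₀ ha] at h; linarith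
    apply mul_le_mul_of_nonpos_left _ h1
    rw [Real.exp_le_exp]; nlinarith

/-- The payoff `a * x - c` integrated against the likelihood of an observed signal value `y`; up to a
positive factor it is the conditional expected payoff given that value. The parameter `w` stands
for `σ ^ 2 * (1 - t)`. -/
def payoffTransform (ν : Measure ℝ) (a c t w y : ℝ) : ℝ :=
  ∫ x, (a * x - c) * rexp ((x * y - t * x ^ 2 / 2) / w) ∂ν

/-- Moving the signal from `y₀` to `y` multiplies the likelihood by `exp (x * (y - y₀) / w)`; replacing
this factor by its value at the zero `c / a` of the payoff gives a lower bound which is a multiple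
of `payoffTransform ν a c t w y₀`. -/
theorem payoffTransform_nonneg {ν : Measure ℝ} [IsFiniteMeasure ν]
    (hcs : ∃ K : Set ℝ, IsCompact K ∧ ν Kᶜ = 0) {a c t w y₀ y : ℝ} (ha : 0 < a) (hw : 0 < w)
    (h₀ : payoffTransform ν a c t w y₀ = 0) (hy : y₀ ≤ y) :
    0 ≤ payoffTransform ν a c t w y := by
  have h : rexp ((y - y₀) / w * (c / a)) * payoffTransform ν a c t w y₀
      ≤ payoffTransform ν a c t w y := by
    unfold payoffTransform
    rw [← integral_const_mul]
    refine integral_mono (integrable_of_continuous_of_compl_null hcs (by fun_prop))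
      (integrable_of_continuous_of_compl_null hcs (by fun_prop)) fun x => ?_
    have := mul_exp_le_mul_exp (c := c) (x := x) (r := (x * y₀ - t * x ^ 2 / 2) / w) ha
      (div_nonneg (sub_nonneg.mpr hy) hw.le)
    rw [Real.exp_add] at this
    calc _ = _ := by ring
      _ ≤ _ := this
      _ = _ := by congr 2; ring
  rwa [h₀, mul_zero] at h

/-- The mirror image of `payoffTransform_nonneg`. -/
theorem payoffTransform_nonpos {ν : Measure ℝ} [IsFiniteMeasure ν]
    (hcs : ∃ K : Set ℝ, IsCompact K ∧ ν Kᶜ = 0) {a c t w y₀ y : ℝ} (ha : 0 < a) (hw : 0 < w)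
    (h₀ : payoffTransform ν a c t w y₀ = 0) (hy : y ≤ y₀) :
    payoffTransform ν a c t w y ≤ 0 := by
  have h : payoffTransform ν a c t w y
      ≤ rexp ((y - y₀) / w * (c / a)) * payoffTransform ν a c t w y₀ := by
    unfold payoffTransform
    rw [← integral_const_mul]
    refine integral_mono (integrable_of_continuous_of_compl_null hcs (by fun_prop))
      (integrable_of_continuous_of_compl_null hcs (by fun_prop)) fun x => ?_
    have := mul_exp_le_mul_exp' (c := c) (x := x) (r := (x * y₀ - t * x ^ 2 / 2) / w) ha
      (div_nonpos_of_nonpos_of_nonneg (sub_nonpos.mpr hy) hw.le)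
    rw [Real.exp_add (_ * (c / a))] at this
    calc _ = _ := by congr 2; ring
      _ ≤ _ := this
      _ = _ := by ring
  rwa [h₀, mul_zero] at h

/-! ### Gaussian signals -/

/-- Completing the square: the likelihood ratio of `N(t x, t w)` with respect to `N(0, t w)`. -/
theorem gaussianPDFReal_eq_mul_exp {t w : ℝ} (ht : 0 < t) (hw : 0 < w) (x y : ℝ) :
    gaussianPDFReal (t * x) (t * w).toNNReal y
      = gaussianPDFReal 0 (t * w).toNNReal y * rexp ((x * y - t * x ^ 2 / 2) / w) := by
  have : 0 < t * w := by positivity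
  simp only [gaussianPDFReal, Real.coe_toNNReal _ this.le]
  rw [mul_assoc (√_)⁻¹, ← Real.exp_add]
  congr 2
  field_simp
  ring

theorem integrable_payoff_mul_pdf {ν : Measure ℝ} [IsFiniteMeasure ν]
    (hcs : ∃ K : Set ℝ, IsCompact K ∧ ν Kᶜ = 0) {a c t w : ℝ} (ht : 0 < t) (hw : 0 < w) :
    Integrable (fun p : ℝ × ℝ => (a * p.1 - c) * gaussianPDFReal (t * p.1) (t * w).toNNReal p.2)
      (ν.prod volume) := by
  have hv : (t * w).toNNReal ≠ 0 := by simpa using mul_pos ht hw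
  rw [integrable_prod_iff (by unfold gaussianPDFReal; fun_prop)]
  refine ⟨ae_of_all _ fun x =>
    (integrable_gaussianPDFReal (t * x) (t * w).toNNReal).const_mul (a * x - c), ?_⟩
  have : (fun x => ∫ y, ‖(a * x - c) * gaussianPDFReal (t * x) (t * w).toNNReal y‖)
      = fun x => |a * x - c| := by
    ext x
    simp_rw [norm_mul, Real.norm_eq_abs, abs_of_nonneg (gaussianPDFReal_nonneg _ _ _)]
    rw [integral_const_mul, integral_gaussianPDFReal_eq_one _ hv, mul_one]
  simp only [this]
  exact integrable_of_continuous_of_compl_null hcs (by fun_prop)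

/-- Fubini turns the payoff-weighted Gaussian mass of `S` into an integral over `S`. Integrability is
kept in the conclusion so that these integrals can be compared for different `S`. -/
theorem integral_payoff_mul_gaussian {ν : Measure ℝ} [IsFiniteMeasure ν]
    (hcs : ∃ K : Set ℝ, IsCompact K ∧ ν Kᶜ = 0) {a c t w : ℝ} (ht : 0 < t) (hw : 0 < w)
    {S : Set ℝ} (hS : MeasurableSet S) :
    Integrable (S.indicator fun y =>
      gaussianPDFReal 0 (t * w).toNNReal y * payoffTransform ν a c t w y) ∧
    ∫ x, (a * x - c) * (gaussianReal (t * x) (t * w).toNNReal).real S ∂ν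
      = ∫ y, S.indicator (fun y =>
          gaussianPDFReal 0 (t * w).toNNReal y * payoffTransform ν a c t w y) y := by
  have hv : (t * w).toNNReal ≠ 0 := by simpa using mul_pos ht hw
  have hprod := integrable_payoff_mul_pdf hcs (a := a) (c := c) ht hw
  have hinner : ∀ y, ∫ x, (a * x - c) * gaussianPDFReal (t * x) (t * w).toNNReal y ∂ν
      = gaussianPDFReal 0 (t * w).toNNReal y * payoffTransform ν a c t w y := by
    intro y
    simp_rw [gaussianPDFReal_eq_mul_exp ht hw]
    rw [payoffTransform, ← integral_const_mul]
    congr 1 with x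
    ring
  constructor
  · have := hprod.integral_prod_right
    simp only [hinner] at this
    exact this.indicator hS
  · rw [integral_indicator hS]
    simp_rw [← hinner]
    rw [← integral_integral_swap (f := fun x y =>
      (a * x - c) * gaussianPDFReal (t * x) (t * w).toNNReal y)]
    · congr 1 with x
      rw [integral_const_mul, Measure.real, gaussianReal_apply_eq_integral _ hv,
        ENNReal.toReal_ofReal (integral_nonneg fun _ => gaussianPDFReal_nonneg _ _ _)]
    · have := hprod.restrict (s := univ ×ˢ S)
      rwa [← Measure.prod_restrict, Measure.restrict_univ] at this

/-- Among all acceptance regions for the signal, the half-line above the zero `y₀` of the payoff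
transform has the largest expected payoff. -/
theorem integral_payoff_mul_gaussian_le {ν : Measure ℝ} [IsFiniteMeasure ν]
    (hcs : ∃ K : Set ℝ, IsCompact K ∧ ν Kᶜ = 0) {a c t w y₀ : ℝ} (ha : 0 < a) (ht : 0 < t)
    (hw : 0 < w) (h₀ : payoffTransform ν a c t w y₀ = 0) {S : Set ℝ} (hS : MeasurableSet S) :
    ∫ x, (a * x - c) * (gaussianReal (t * x) (t * w).toNNReal).real S ∂ν
      ≤ ∫ x, (a * x - c) * (gaussianReal (t * x) (t * w).toNNReal).real (Ioi y₀) ∂ν := by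
  obtain ⟨h1, e1⟩ := integral_payoff_mul_gaussian hcs (a := a) (c := c) ht hw hS
  obtain ⟨h2, e2⟩ := integral_payoff_mul_gaussian hcs (a := a) (c := c) ht hw
    (measurableSet_Ioi (a := y₀))
  rw [e1, e2]
  refine integral_mono h1 h2 fun y => ?_
  have hp := gaussianPDFReal_nonneg 0 (t * w).toNNReal y
  rcases lt_or_ge y₀ y with hy | hy
  · have := mul_nonneg hp (payoffTransform_nonneg hcs ha hw h₀ hy.le)
    by_cases hyS : y ∈ S <;> simp [hyS, hy, this]
  · have := mul_nonpos_of_nonneg_of_nonpos hp (payoffTransform_nonpos hcs ha hw h₀ hy)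
    by_cases hyS : y ∈ S <;> simp [hyS, hy.not_gt, this]

theorem gaussianReal_real_Ioi {v : ℝ} (hv : 0 < v) (m y₀ : ℝ) :
    (gaussianReal m v.toNNReal).real (Ioi y₀)
      = ∫ y in Iio ((m - y₀) / √v), (√(2 * π))⁻¹ * rexp (-(y ^ 2) / 2) := by
  have hs : 0 < √v := Real.sqrt_pos.mpr hv
  have hmap : gaussianReal m v.toNNReal = (gaussianReal 0 1).map (fun y => m - √v * y) := by
    have e : (fun y => m - √v * y) = (m - ·) ∘ (√v * ·) := rfl
    rw [e, ← Measure.map_map (by fun_prop) (by fun_prop), gaussianReal_map_const_mul,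
      gaussianReal_map_const_sub]
    congr 1
    · simp
    · ext
      simp [Real.sq_sqrt hv.le, hv.le]
  have hpre : (fun y => m - √v * y) ⁻¹' Ioi y₀ = Iio ((m - y₀) / √v) := by
    ext y
    simp only [mem_preimage, mem_Ioi, mem_Iio, lt_div_iff₀ hs]
    constructor <;> intro h <;> linarith
  rw [hmap, Measure.real, Measure.map_apply (by fun_prop) measurableSet_Ioi, hpre,
    gaussianReal_apply_eq_integral _ one_ne_zero,
    ENNReal.toReal_ofReal (integral_nonneg fun _ => gaussianPDFReal_nonneg _ _ _)]
  simp [gaussianPDFReal]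

theorem map_sum_eq_gaussianReal {Ω ι : Type*} [MeasurableSpace Ω] {P : Measure Ω}
    [IsProbabilityMeasure P] {g : ι → Ω → ℝ} (hg : ∀ i, Measurable (g i)) (hind : iIndepFun g P)
    {v : ι → ℝ≥0} (hlaw : ∀ i, P.map (g i) = gaussianReal 0 (v i)) (s : Finset ι) :
    P.map (∑ i ∈ s, g i) = gaussianReal 0 (∑ i ∈ s, v i) := by
  induction s using Finset.induction_on with
  | empty => 
    simp only [Finset.sum_empty, gaussianReal_zero_var]
    exact Measure.map_const P (0 : ℝ) |>.trans (by simp)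
  | insert i s hi ih =>
    rw [Finset.sum_insert hi, Finset.sum_insert hi,
      (hind.indepFun_finsetSum_of_notMem hg hi).symm.map_add_eq_map_conv_map (hg i) (by fun_prop),
      ih, hlaw, gaussianReal_conv_gaussianReal, add_zero]

/-! ### Law of the observation -/

theorem measurable_observation {Ω ι : Type*} [MeasurableSpace Ω] [Countable ι]
    [MeasurableSpace ι] [MeasurableSingletonClass ι] {κ : Ω → ι} (hκ : Measurable κ)
    {η : ι → Ω → ℝ} (hη : ∀ k, Measurable (η k)) : Measurable fun ω => (η (κ ω) ω, κ ω) := by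
  have h : Measurable fun p : Ω × ι => η p.2 p.1 := measurable_from_prod_countable_left hη
  exact (h.comp (measurable_id.prodMk hκ)).prodMk hκ

/-- Expected payoff on the event `U ∩ {t * X + B ∈ S}`, where `B` is Gaussian noise independent of `X`,
and `(X, B)` is independent of `U`. -/
theorem setIntegral_signal {Ω : Type*} [MeasurableSpace Ω] {P : Measure Ω}
    [IsProbabilityMeasure P] {X B : Ω → ℝ} (hX : Measurable X) (hB : Measurable B)
    {ν : Measure ℝ} [IsProbabilityMeasure ν] (hlaw : P.map X = ν)
    (hcs : ∃ K : Set ℝ, IsCompact K ∧ ν Kᶜ = 0) {v : ℝ≥0} (hBlaw : P.map B = gaussianReal 0 v)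
    (hXB : IndepFun X B P) {U : Set Ω} (hU : MeasurableSet U)
    (hUXB : IndepFun (U.indicator fun _ => (1 : ℝ)) (fun ω => (X ω, B ω)) P)
    (a c t : ℝ) {S : Set ℝ} (hS : MeasurableSet S) :
    ∫ ω in U ∩ (fun ω => t * X ω + B ω) ⁻¹' S, (a * X ω - c) ∂P
      = P.real U * ∫ x, (a * x - c) * (gaussianReal (t * x) v).real S ∂ν := by
  have hφ : Measurable fun p : ℝ × ℝ => S.indicator (fun _ => a * p.1 - c) (t * p.1 + p.2) := by
    have h : MeasurableSet ((fun p : ℝ × ℝ => t * p.1 + p.2) ⁻¹' S) := hS.preimage (by fun_prop)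
    exact Measurable.indicator (f := fun p : ℝ × ℝ => a * p.1 - c) (by fun_prop) h
  have hind : ∀ x, Integrable (fun b => S.indicator (fun _ => a * x - c) (t * x + b))
      (gaussianReal 0 v) := fun x =>
    (integrable_const (a * x - c)).indicator (hS.preimage (by fun_prop : Measurable (t * x + ·)))
  have hprod : Integrable (fun p : ℝ × ℝ => S.indicator (fun _ => a * p.1 - c) (t * p.1 + p.2))
      (ν.prod (gaussianReal 0 v)) := by
    have h : Integrable (fun p : ℝ × ℝ => a * p.1 - c) (ν.prod (gaussianReal 0 v)) :=
      (integrable_of_continuous_of_compl_null hcs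
        (f := fun x => a * x - c) (by fun_prop)).comp_fst _
    refine h.mono hφ.aestronglyMeasurable (ae_of_all _ fun p => ?_)
    exact norm_indicator_le_norm_self _ _
  have hjoint : P.map (fun ω => (X ω, B ω)) = ν.prod (gaussianReal 0 v) := by
    rw [hXB.map_prod_eq_prod_map_map hX.aemeasurable hB.aemeasurable, hlaw, hBlaw]
  have hVmeas : MeasurableSet ((fun ω => t * X ω + B ω) ⁻¹' S) := hS.preimage (by fun_prop)
  calc ∫ ω in U ∩ (fun ω => t * X ω + B ω) ⁻¹' S, (a * X ω - c) ∂P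
      = ∫ ω, U.indicator (fun _ => (1 : ℝ)) ω
          * S.indicator (fun _ => a * X ω - c) (t * X ω + B ω) ∂P := by
        rw [← integral_indicator (hU.inter hVmeas)]
        congr 1 with ω
        by_cases h1 : ω ∈ U <;> by_cases h2 : t * X ω + B ω ∈ S <;> simp [h1, h2]
    _ = (∫ ω, U.indicator (fun _ => (1 : ℝ)) ω ∂P)
          * ∫ ω, S.indicator (fun _ => a * X ω - c) (t * X ω + B ω) ∂P :=
        (hUXB.comp measurable_id hφ).integral_fun_mul_eq_mul_integral
          (measurable_const.indicator hU).aestronglyMeasurable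
          (hφ.comp (hX.prodMk hB)).aestronglyMeasurable
    _ = _ := by
        congr 1
        · rw [integral_indicator hU]; simp
        · rw [← integral_map (f := fun p : ℝ × ℝ => S.indicator (fun _ => a * p.1 - c)
            (t * p.1 + p.2)) (φ := fun ω => (X ω, B ω)) (hX.prodMk hB).aemeasurable
            hφ.aestronglyMeasurable, hjoint, integral_prod _ hprod]
          congr 1 with x
          have hpre : MeasurableSet ((t * x + ·) ⁻¹' S) := hS.preimage (by fun_prop)
          have hshift : (gaussianReal (t * x) v) = (gaussianReal 0 v).map (t * x + ·) := by
            rw [gaussianReal_map_const_add, zero_add]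
          rw [hshift, Measure.real, Measure.map_apply (by fun_prop) hS]
          have : (fun b => S.indicator (fun _ => a * x - c) (t * x + b))
              = ((t * x + ·) ⁻¹' S).indicator fun _ => a * x - c := rfl
          rw [this, integral_indicator hpre, setIntegral_const, smul_eq_mul, mul_comm,
            Measure.real]

/-- Independence of the σ-algebras of the hypothesis, specialized to the real random variables
`X`, `1_{κ = k}` and the values of the bridges at time `t`. -/
theorem iIndepFun_sources {Ω : Type*} [MeasurableSpace Ω] {P : Measure Ω}
    {n : ℕ} {X : Ω → ℝ} {β : Fin n → ℝ → Ω → ℝ} {κ : Ω → Fin n → Bool}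
    (hindep : iIndep (fun j : Bool ⊕ Fin n =>
        Sum.elim
          (fun b => if b then MeasurableSpace.comap X inferInstance
            else MeasurableSpace.comap κ inferInstance)
          (fun i => sigmaUpTo (β i) 1) j) P)
    {t : ℝ} (ht : t ∈ Icc (0 : ℝ) 1) (k : Fin n → Bool) :
    iIndepFun (fun j : Bool ⊕ Fin n => Sum.elim
      (fun b => if b then X else {ω | κ ω = k}.indicator fun _ => (1 : ℝ)) (fun i => β i t) j)
      P := by
  rw [iIndepFun_iff_iIndep, iIndep_iff]
  rw [iIndep_iff] at hindep
  intro s f hf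
  refine hindep s fun j hj => ?_
  have hfj := hf j hj
  rcases j with (_ | _) | i
  · change MeasurableSet[MeasurableSpace.comap κ inferInstance] (f (Sum.inl false))
    change MeasurableSet[MeasurableSpace.comap ({ω | κ ω = k}.indicator fun _ => (1 : ℝ))
      inferInstance] (f (Sum.inl false)) at hfj
    have hm : Measurable[MeasurableSpace.comap κ inferInstance]
        ({ω | κ ω = k}.indicator fun _ => (1 : ℝ)) :=
      Measurable.indicator measurable_const ⟨{k}, measurableSet_singleton k, rfl⟩
    exact hm.comap_le _ hfj
  · exact hfj
  · have hle : MeasurableSpace.comap (β i t) inferInstance ≤ sigmaUpTo (β i) 1 :=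
      le_iSup₂_of_le (f := fun s (_ : s ∈ Icc (0 : ℝ) 1) =>
        MeasurableSpace.comap (β i s) inferInstance) t ht le_rfl
    exact hle _ hfj

/-- A linear combination `B` of the bridge values at time `t` is centered Gaussian, `B` is independent
of `X`, and `(X, B)` is independent of the event `{κ = k}`. -/
theorem noise_law_and_indep {Ω : Type*} [MeasurableSpace Ω] {P : Measure Ω} [IsProbabilityMeasure P]
    {n : ℕ} {X : Ω → ℝ} (hX : Measurable X) {β : Fin n → ℝ → Ω → ℝ}
    (hβ : ∀ i, IsStdBrownianBridge P (β i)) {κ : Ω → Fin n → Bool} (hκ : Measurable κ)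
    (hindep : iIndep (fun j : Bool ⊕ Fin n =>
        Sum.elim
          (fun b => if b then MeasurableSpace.comap X inferInstance
            else MeasurableSpace.comap κ inferInstance)
          (fun i => sigmaUpTo (β i) 1) j) P)
    {t : ℝ} (ht : t ∈ Icc (0 : ℝ) 1) (k : Fin n → Bool) (s : Finset (Fin n)) (d : Fin n → ℝ) :
    let B : Ω → ℝ := fun ω => ∑ i ∈ s, d i * β i t ω
    P.map B = gaussianReal 0 ((∑ i ∈ s, d i ^ 2) * (t * (1 - t))).toNNReal ∧
    IndepFun X B P ∧
    IndepFun ({ω | κ ω = k}.indicator fun _ => (1 : ℝ)) (fun ω => (X ω, B ω)) P := by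
  intro B
  set f : Bool ⊕ Fin n → Ω → ℝ := fun j => Sum.elim
      (fun b => if b then X else {ω | κ ω = k}.indicator fun _ => (1 : ℝ)) (fun i => β i t) j
    with hf
  have hind : iIndepFun f P := iIndepFun_sources hindep ht k
  have hfm : ∀ j, Measurable (f j) := by
    rintro ((_ | _) | i)
    · exact measurable_const.indicator (hκ (measurableSet_singleton k))
    · exact hX
    · exact (hβ i).1 t
  have hvar : 0 ≤ t * (1 - t) := mul_nonneg ht.1 (by linarith [ht.2])
  refine ⟨?_, ?_, ?_⟩
  · have hg : iIndepFun (fun i ω => d i * β i t ω) P :=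
      (hind.precomp Sum.inr_injective).comp (fun i x => d i * x) (fun i => by fun_prop)
    have hlaw : ∀ i, P.map (fun ω => d i * β i t ω)
        = gaussianReal 0 (d i ^ 2 * (t * (1 - t))).toNNReal := by
      intro i
      have := (hβ i).2.2 1 (fun _ => t) (fun _ => ht) (fun _ => d i)
      simp only [Finset.univ_unique, Finset.sum_singleton, min_self] at this
      rw [this]
      congr 2
      ring
    have hsum := map_sum_eq_gaussianReal (fun i => ((hβ i).1 t).const_mul (d i)) hg hlaw s
    rw [Finset.sum_mul, Real.toNNReal_sum_of_nonneg fun i _ => mul_nonneg (sq_nonneg _) hvar,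
      ← hsum]
    congr 1
    ext ω
    simp [B]
  · have h := hind.indepFun_finset {Sum.inl true} (Finset.univ.map ⟨Sum.inr, Sum.inr_injective⟩)
      (by simp) hfm
    exact h.comp
      (φ := fun x : ({Sum.inl true} : Finset (Bool ⊕ Fin n)) → ℝ => x ⟨Sum.inl true, by simp⟩)
      (ψ := fun x : (Finset.univ.map ⟨Sum.inr, Sum.inr_injective⟩ :
        Finset (Bool ⊕ Fin n)) → ℝ => ∑ i ∈ s, d i * x ⟨Sum.inr i, by simp⟩)
      (by fun_prop) (by fun_prop)
  · have h := hind.indepFun_finset {Sum.inl false} (Finset.univ.erase (Sum.inl false))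
      (by simp) hfm
    exact h.comp
      (φ := fun x : ({Sum.inl false} : Finset (Bool ⊕ Fin n)) → ℝ => x ⟨Sum.inl false, by simp⟩)
      (ψ := fun x : (Finset.univ.erase (Sum.inl false) : Finset (Bool ⊕ Fin n)) → ℝ =>
        (x ⟨Sum.inl true, by simp⟩, ∑ i ∈ s, d i * x ⟨Sum.inr i, by simp⟩))
      (by fun_prop) (by fun_prop)

/-! ### The price of the call -/

/-- Proposition 3.1: information-based option pricing.
The time-`0` price of a European call exercisable at `t` is a mixture, over the possible
information-state configurations `k ∈ 𝕊 = {0,1}ⁿ ∖ {0}`, of Black–Scholes–Merton-type prices: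
`C₀ = P_{0t} ∑_{k∈𝕊} ℙ(κ = k) ∫ (P_{t1}x − K)·𝒩(−ẑ_t(k) + x√t/(σ̂(k)√(1−t))) ν(dx)`. -/
theorem information_based_call_price
    {Ω : Type*} [m0 : MeasurableSpace Ω] (P : Measure Ω) [IsProbabilityMeasure P]
    (n : ℕ) (X : Ω → ℝ) (hX : Measurable X)
    (ν : Measure ℝ) [IsProbabilityMeasure ν] (hlaw : Measure.map X P = ν)
    (hcs : ∃ K : Set ℝ, IsCompact K ∧ ν Kᶜ = 0)
    (hnd : ∀ c : ℝ, ν ≠ Measure.dirac c)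
    (β : Fin n → ℝ → Ω → ℝ) (hβ : ∀ i, IsStdBrownianBridge P (β i))
    (σ : Fin n → ℝ) (hσ : ∀ i, 0 < σ i)
    (ξ : Fin n → ℝ → Ω → ℝ) (hξ : ∀ i s ω, ξ i s ω = s * X ω + σ i * β i s ω)
    (κ : Ω → Fin n → Bool) (hκmeas : Measurable κ)
    (hκS : ∀ ω, κ ω ≠ fun _ => false)
    (hindep : iIndep (fun j : Bool ⊕ Fin n =>
        Sum.elim
          (fun b => if b then MeasurableSpace.comap X inferInstance
            else MeasurableSpace.comap κ inferInstance)
          (fun i => sigmaUpTo (β i) 1) j) P)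
    (t : ℝ) (ht : t ∈ Set.Ioo (0:ℝ) 1)
    (P0t Pt1 : ℝ) (hP0t : P0t ∈ Set.Ioc (0:ℝ) 1) (hPt1 : Pt1 ∈ Set.Ioc (0:ℝ) 1)
    (K : ℝ) (hK : 0 < K)
    (hsign₁ : 0 < ν {x | Pt1 * x - K < 0}) (hsign₂ : 0 < ν {x | 0 < Pt1 * x - K})
    (σhat : (Fin n → Bool) → ℝ)
    (hσhat : ∀ k, σhat k
        = (Real.sqrt (∑ i ∈ Finset.univ.filter (fun i => k i = true), ((σ i) ^ 2)⁻¹))⁻¹)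
    (ξhat : (Fin n → Bool) → Ω → ℝ)
    (hξhat : ∀ k ω, ξhat k ω
        = (σhat k) ^ 2 * ∑ i ∈ Finset.univ.filter (fun i => k i = true), ((σ i) ^ 2)⁻¹ * ξ i t ω)
    (ς : (Fin n → Bool) → ℝ)
    (hς : ∀ k : Fin n → Bool, k ≠ (fun _ => false) →
        ∫ x, (Pt1 * x - K) *
          Real.exp ((x * ς k - t * x ^ 2 / 2) / ((σhat k) ^ 2 * (1 - t))) ∂ν = 0)
    (zhat : (Fin n → Bool) → ℝ)
    (hzhat : ∀ k, zhat k = ς k / (σhat k * Real.sqrt (t * (1 - t))))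
    (Nstd : ℝ → ℝ)
    (hN : ∀ z, Nstd z = ∫ y in Set.Iio z, (Real.sqrt (2 * Real.pi))⁻¹ * Real.exp (-(y ^ 2) / 2))
    (C0 : ℝ)
    (hC0 : C0 = P0t * ∫ ω, max
        (Pt1 * (P[X | MeasurableSpace.comap
            (fun ω' => (ξhat (κ ω') ω', κ ω')) inferInstance]) ω - K) 0 ∂P) :
    C0 = P0t * ∑ k ∈ Finset.univ.filter (fun k : Fin n → Bool => k ≠ fun _ => false),
      (P {ω | κ ω = k}).toReal *
        ∫ x, (Pt1 * x - K) *
          Nstd (-(zhat k) + x * Real.sqrt t / (σhat k * Real.sqrt (1 - t))) ∂ν := by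
  have ht0 : 0 < t := ht.1
  have ht1 : 0 < 1 - t := sub_pos.mpr ht.2
  have hκset : ∀ k, MeasurableSet {ω | κ ω = k} := fun k => hκmeas (measurableSet_singleton k)
  have hβm : ∀ i, Measurable (β i t) := fun i => (hβ i).1 t
  -- The precision `∑ σᵢ⁻²` is positive for an active configuration, so `σhat k` is not junk.
  have hprec : ∀ k : Fin n → Bool, k ≠ (fun _ => false) →
      0 < ∑ i ∈ Finset.univ.filter (fun i => k i = true), ((σ i) ^ 2)⁻¹ := by
    intro k hk
    obtain ⟨i, hi⟩ := Function.ne_iff.mp hk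
    refine Finset.sum_pos (fun j _ => by have := hσ j; positivity) ⟨i, ?_⟩
    simpa using hi
  have hσpos : ∀ k : Fin n → Bool, k ≠ (fun _ => false) → 0 < σhat k := by
    intro k hk
    rw [hσhat]
    exact inv_pos.mpr (Real.sqrt_pos.mpr (hprec k hk))
  have hσsq : ∀ k : Fin n → Bool, k ≠ (fun _ => false) →
      σhat k ^ 2 * ∑ i ∈ Finset.univ.filter (fun i => k i = true), ((σ i) ^ 2)⁻¹ = 1 := by
    intro k hk
    rw [hσhat, inv_pow, Real.sq_sqrt (hprec k hk).le, inv_mul_cancel₀ (hprec k hk).ne']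
  have hξm : ∀ k, Measurable (ξhat k) := by
    intro k
    have : ξhat k = fun ω => σhat k ^ 2 * ∑ i ∈ Finset.univ.filter (fun i => k i = true),
        ((σ i) ^ 2)⁻¹ * (t * X ω + σ i * β i t ω) := by
      ext ω
      simp only [hξhat, hξ]
    rw [this]
    fun_prop
  -- `ξhat k` is Gaussian around `t * X` with variance `σhat k ^ 2 * t * (1 - t)`.
  have hkey : ∀ k : Fin n → Bool, k ≠ (fun _ => false) → ∀ S : Set ℝ, MeasurableSet S →
      ∫ ω in {ω | κ ω = k} ∩ ξhat k ⁻¹' S, (Pt1 * X ω - K) ∂P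
        = (P {ω | κ ω = k}).toReal * ∫ x, (Pt1 * x - K) *
          (gaussianReal (t * x) (t * (σhat k ^ 2 * (1 - t))).toNNReal).real S ∂ν := by
    intro k hk S hS
    obtain ⟨hB, hXB, hU⟩ := noise_law_and_indep hX hβ hκmeas hindep ⟨ht.1.le, ht.2.le⟩ k
      (Finset.univ.filter (fun i => k i = true)) (fun i => σhat k ^ 2 * (σ i)⁻¹)
    have hv : (∑ i ∈ Finset.univ.filter (fun i => k i = true), (σhat k ^ 2 * (σ i)⁻¹) ^ 2)
        * (t * (1 - t)) = t * (σhat k ^ 2 * (1 - t)) := by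
      have : ∑ i ∈ Finset.univ.filter (fun i => k i = true), (σhat k ^ 2 * (σ i)⁻¹) ^ 2
          = σhat k ^ 2 * (σhat k ^ 2 *
            ∑ i ∈ Finset.univ.filter (fun i => k i = true), ((σ i) ^ 2)⁻¹) := by
        rw [Finset.mul_sum, Finset.mul_sum]
        refine Finset.sum_congr rfl fun i _ => ?_
        rw [mul_pow, inv_pow]
        ring
      rw [this, hσsq k hk]
      ring
    rw [hv] at hB
    have hξeq : ξhat k = fun ω => t * X ω + ∑ i ∈ Finset.univ.filter (fun i => k i = true),
        (σhat k ^ 2 * (σ i)⁻¹) * β i t ω := by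
      ext ω
      have : ∀ i, ((σ i) ^ 2)⁻¹ * ξ i t ω
          = t * X ω * ((σ i) ^ 2)⁻¹ + (σ i)⁻¹ * β i t ω := by
        intro i
        have := (hσ i).ne'
        rw [hξ]
        field_simp
      simp only [hξhat, this, Finset.sum_add_distrib, mul_add, ← Finset.mul_sum, mul_assoc]
      have h := hσsq k hk
      linear_combination (t * X ω) * h
    rw [hξeq]
    exact setIntegral_signal hX (by fun_prop) hlaw hcs hB hXB (hκset k) hU Pt1 K t hS
  -- Splitting an observable event `G ⁻¹' S` along the finitely many values of `κ`.
  set G : Ω → ℝ × (Fin n → Bool) := fun ω => (ξhat (κ ω) ω, κ ω) with hGdef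
  have hG : Measurable G := measurable_observation hκmeas hξm
  have hXint : Integrable X P := by
    have h := integrable_of_continuous_of_compl_null hcs continuous_id
    rw [← hlaw] at h
    exact h.comp_measurable hX
  have hZint : Integrable (fun ω => Pt1 * X ω - K) P :=
    (hXint.const_mul _).sub (integrable_const _)
  have hsplit : ∀ S : Set (ℝ × (Fin n → Bool)), MeasurableSet S →
      ∫ ω in G ⁻¹' S, (Pt1 * X ω - K) ∂P
        = ∑ k ∈ Finset.univ.filter (fun k : Fin n → Bool => k ≠ fun _ => false),
          (P {ω | κ ω = k}).toReal * ∫ x, (Pt1 * x - K) *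
            (gaussianReal (t * x) (t * (σhat k ^ 2 * (1 - t))).toNNReal).real
              ((fun y => (y, k)) ⁻¹' S) ∂ν := by
    intro S hS
    have hunion : G ⁻¹' S = ⋃ k ∈ Finset.univ.filter (fun k : Fin n → Bool => k ≠ fun _ => false),
        {ω | κ ω = k} ∩ ξhat k ⁻¹' ((fun y => (y, k)) ⁻¹' S) := by
      ext ω
      simp only [mem_preimage, hGdef, mem_iUnion, Finset.mem_filter, Finset.mem_univ, true_and,
        mem_inter_iff, mem_ofPred_eq, exists_prop]
      constructor
      · intro h
        exact ⟨κ ω, hκS ω, rfl, h⟩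
      · rintro ⟨k, _, rfl, h⟩
        exact h
    have hSk : ∀ k, MeasurableSet ((fun y : ℝ => (y, k)) ⁻¹' S) := fun k =>
      hS.preimage (by fun_prop)
    rw [hunion, integral_biUnion_finset]
    · refine Finset.sum_congr rfl fun k hk => ?_
      exact hkey k (Finset.mem_filter.mp hk).2 _ (hSk k)
    · exact fun k _ => (hκset k).inter (hξm k (hSk k))
    · intro k _ l _ hkl
      refine Set.disjoint_left.mpr ?_
      rintro ω ⟨h1, _⟩ ⟨h2, _⟩
      exact hkl (h1.symm.trans h2)
    · exact fun k _ => hZint.integrableOn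
  have hA : MeasurableSet {p : ℝ × (Fin n → Bool) | ς p.2 < p.1} :=
    measurableSet_lt ((measurable_of_countable ς).comp measurable_snd) measurable_fst
  have hm : MeasurableSpace.comap G inferInstance ≤ m0 := hG.comap_le
  have hcond : (fun ω => max (Pt1 * (P[X | MeasurableSpace.comap G inferInstance]) ω - K) 0)
      =ᵐ[P] fun ω =>
        max ((P[fun ω => Pt1 * X ω - K | MeasurableSpace.comap G inferInstance]) ω) 0 := by
    have h1 := condExp_sub (hXint.const_mul Pt1) (integrable_const K)
      (MeasurableSpace.comap G inferInstance)
    have h2 := condExp_smul (μ := P) Pt1 X (MeasurableSpace.comap G inferInstance)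
    have h3 := condExp_const (μ := P) hm K
    filter_upwards [h1, h2] with ω h1 h2
    have e : (P[fun ω => Pt1 * X ω - K | MeasurableSpace.comap G inferInstance]) ω
        = (P[fun ω => Pt1 * X ω | MeasurableSpace.comap G inferInstance]) ω - K := by
      refine h1.trans ?_
      simp only [Pi.sub_apply, h3]
    have e2 : (P[fun ω => Pt1 * X ω | MeasurableSpace.comap G inferInstance]) ω
        = Pt1 * (P[X | MeasurableSpace.comap G inferInstance]) ω := h2
    rw [e, e2]
  have hsec : ∀ k, (fun y : ℝ => (y, k)) ⁻¹' {p : ℝ × (Fin n → Bool) | ς p.2 < p.1}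
      = Ioi (ς k) := fun k => rfl
  rw [hC0, integral_congr_ae hcond, integral_max_condExp_eq_of_forall_le hm P hZint
    (A := G ⁻¹' {p | ς p.2 < p.1}) ⟨_, hA, rfl⟩, hsplit _ hA]
  · -- The exercise event is the half-line `(ς k, ∞)` in each configuration.
    congr 1
    refine Finset.sum_congr rfl fun k hk => ?_
    have hs := hσpos k (Finset.mem_filter.mp hk).2
    congr 2 with x
    rw [hsec, gaussianReal_real_Ioi (by positivity), hN]
    congr 4
    -- Standardizing `t * x - ς k` by `σhat k * √(t * (1 - t))`.
    have e1 : √(t * (σhat k ^ 2 * (1 - t))) = σhat k * (√t * √(1 - t)) := by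
      rw [Real.sqrt_mul ht0.le, Real.sqrt_mul (sq_nonneg _), Real.sqrt_sq hs.le]
      ring
    have h1 : √t ≠ 0 := (Real.sqrt_pos.mpr ht0).ne'
    have h2 : √(1 - t) ≠ 0 := (Real.sqrt_pos.mpr ht1).ne'
    have h3 : √t * √t = t := Real.mul_self_sqrt ht0.le
    rw [hzhat, e1, Real.sqrt_mul ht0.le]
    field_simp
    linear_combination -x * h3
  · -- Every observable event is `G ⁻¹' S`; its payoff is bounded one configuration at a time.
    rintro _ ⟨S, hS, rfl⟩
    rw [hsplit S hS, hsplit _ hA]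
    refine Finset.sum_le_sum fun k hk => ?_
    have hk' := (Finset.mem_filter.mp hk).2
    have hs := hσpos k hk'
    refine mul_le_mul_of_nonneg_left ?_ ENNReal.toReal_nonneg
    rw [hsec]
    exact integral_payoff_mul_gaussian_le hcs hPt1.1 ht0 (by positivity) (hς k hk')
      (hS.preimage (by fun_prop))

end
end
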